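/- Let A and B be n×n Hermitian positive definite complex matrices. Then ‖A^{1/2} − B^{1/2}‖ ≤ ‖A − B‖ / (‖A^{−1/2}‖^{−1} + ‖B^{−1/2}‖^{−1}), where ‖·‖ is the operator norm. Equivalently, ‖A^{1/2} − B^{1/2}‖ ≤ ‖A − B‖ / (λ_min(A)^{1/2} + λ_min(B)^{1/2}), with λ_min denoting the smallest eigenvalue. -/

import Mathlib

/-!
Write `S = A^{1/2}`, `T = B^{1/2}` and `X = S - T`, so that `A - B = S X + X T`. As `X` is Hermitian,
it has a unit eigenvector `v` with real eigenvalue `r`, `|r| = ‖X‖` (`exists_eigenvector_norm`), and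
then `⟪v, (A - B) v⟫ = r (⟪v, S v⟫ + ⟪v, T v⟫)`. The left side is at most `‖A - B‖` in absolute
value, while `S ≥ ‖A^{-1/2}‖⁻¹` and `T ≥ ‖B^{-1/2}‖⁻¹` (`le_inner_matSqrt`) bound the right side
from below; `norm_sub_mul_add_le` combines the two.
-/

open Matrix
open scoped ComplexOrder

variable {n : Type*} [Fintype n] [DecidableEq n]

/-- The matrix logarithm of a (positive definite) matrix, via the functional calculus. -/
noncomputable def matLog (A : Matrix n n ℂ) : Matrix n n ℂ := cfc Real.log A

/-- The matrix square root of a (positive semidefinite) matrix, via the functional calculus. -/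
noncomputable def matSqrt (A : Matrix n n ℂ) : Matrix n n ℂ := cfc Real.sqrt A

/-- The inverse square root `A^{-1/2}` of a (positive definite) matrix,
via the functional calculus. -/
noncomputable def matInvSqrt (A : Matrix n n ℂ) : Matrix n n ℂ :=
  cfc (fun x : ℝ => (Real.sqrt x)⁻¹) A

/-- The `ℓ² → ℓ²` operator norm of a matrix. -/
noncomputable def opNorm (A : Matrix n n ℂ) : ℝ := ‖Matrix.toEuclideanCLM (𝕜 := ℂ) A‖

/-- The commutator `[x, y] = xy - yx`. -/
noncomputable def com (x y : Matrix n n ℂ) : Matrix n n ℂ := x * y - y * x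

/-- The GNS norm `‖a‖_ρ = Tr(ρ a† a)^{1/2}` associated to a state `ρ`. -/
noncomputable def gnsNorm (ρ a : Matrix n n ℂ) : ℝ := Real.sqrt ((ρ * aᴴ * a).trace.re)

open scoped InnerProductSpace in
/-- A self-adjoint operator on a nontrivial finite-dimensional Hilbert space has a real eigenvalue
of absolute value equal to its norm. -/
lemma exists_eigenvector_norm {E : Type*} [NormedAddCommGroup E] [InnerProductSpace ℂ E]
    [FiniteDimensional ℂ E] [CompleteSpace E] [Nontrivial E] {X : E →L[ℂ] E}
    (hX : IsSelfAdjoint X) : ∃ r : ℝ, |r| = ‖X‖ ∧ ∃ v : E, v ≠ 0 ∧ X v = (r : ℂ) • v := by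
  have key : ∀ r : ℝ, r ∈ spectrum ℝ X → ∃ v : E, v ≠ 0 ∧ X v = (r : ℂ) • v := by
    intro r hr
    have h1 : (r : ℂ) ∈ spectrum ℂ X := (spectrum.algebraMap_mem_iff ℂ).2 hr
    have h2 : (r : ℂ) ∈ spectrum ℂ (X : E →ₗ[ℂ] E) := by
      rw [← AlgEquiv.spectrum_eq (Module.End.toContinuousLinearMap E (𝕜 := ℂ))]
      exact h1
    obtain ⟨v, hv⟩ := (Module.End.hasEigenvalue_iff_mem_spectrum.2 h2).exists_hasEigenvector
    exact ⟨v, hv.2, hv.apply_eq_smul⟩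
  rcases CStarAlgebra.norm_or_neg_norm_mem_spectrum hX with h | h
  · exact ⟨_, abs_norm X, key _ h⟩
  · exact ⟨_, by rw [abs_neg, abs_norm], key _ h⟩

open scoped InnerProductSpace in
/-- The operator form of the bound: `‖S - T‖ (s + t) ≤ ‖S² - T²‖` for self-adjoint `S ≥ s` and
`T ≥ t`, by evaluating `S² - T² = S (S - T) + (S - T) T` at an eigenvector of `S - T`. -/
lemma norm_sub_mul_add_le {E : Type*} [NormedAddCommGroup E] [InnerProductSpace ℂ E]
    [FiniteDimensional ℂ E] [CompleteSpace E] [Nontrivial E] {S T : E →L[ℂ] E}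
    (hS : IsSelfAdjoint S) (hT : IsSelfAdjoint T) {s t : ℝ}
    (hs : ∀ v, s * ‖v‖ ^ 2 ≤ (⟪v, S v⟫_ℂ).re) (ht : ∀ v, t * ‖v‖ ^ 2 ≤ (⟪v, T v⟫_ℂ).re) :
    ‖S - T‖ * (s + t) ≤ ‖S * S - T * T‖ := by
  obtain ⟨r, hr, v, hv0, hv⟩ := exists_eigenvector_norm (hS.sub hT)
  have hsplit : S * S - T * T = S * (S - T) + (S - T) * T := by noncomm_ring
  have hform : ⟪v, (S * S - T * T) v⟫_ℂ = (r : ℂ) * (⟪v, S v⟫_ℂ + ⟪v, T v⟫_ℂ) := by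
    have hadj : ⟪v, (S - T) (T v)⟫_ℂ = ⟪(S - T) v, T v⟫_ℂ :=
      ((hS.sub hT).isSymmetric v (T v)).symm
    rw [hsplit, _root_.add_apply, inner_add_right, mul_apply_eq_comp,
      mul_apply_eq_comp, hadj, hv, map_smul, inner_smul_right, inner_smul_left,
      Complex.conj_ofReal, mul_add]
  have hvpos : 0 < ‖v‖ ^ 2 := by positivity
  have hlow : (s + t) * ‖v‖ ^ 2 ≤ ‖⟪v, S v⟫_ℂ + ⟪v, T v⟫_ℂ‖ := by
    refine le_trans ?_ (Complex.re_le_norm _)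
    rw [Complex.add_re, add_mul]
    exact add_le_add (hs v) (ht v)
  have hup : ‖⟪v, (S * S - T * T) v⟫_ℂ‖ ≤ ‖S * S - T * T‖ * ‖v‖ ^ 2 := by
    calc _ ≤ ‖v‖ * ‖(S * S - T * T) v‖ := norm_inner_le_norm _ _
      _ ≤ ‖v‖ * (‖S * S - T * T‖ * ‖v‖) := by gcongr; exact ContinuousLinearMap.le_opNorm _ _
      _ = _ := by ring
  rw [hform, norm_mul, Complex.norm_real, Real.norm_eq_abs, hr] at hup
  refine le_of_mul_le_mul_right ?_ hvpos
  calc _ = ‖S - T‖ * ((s + t) * ‖v‖ ^ 2) := by ring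
    _ ≤ _ := by gcongr
    _ ≤ _ := hup

lemma spectrum_pos_of_posDef {A : Matrix n n ℂ} (hA : A.PosDef) {x : ℝ} (hx : x ∈ spectrum ℝ A) :
    0 < x := by
  rw [hA.isHermitian.spectrum_real_eq_range_eigenvalues] at hx
  obtain ⟨i, rfl⟩ := hx
  exact hA.eigenvalues_pos i

open scoped Matrix.Norms.L2Operator in
/-- Every eigenvalue of `A^{-1/2}` is at most `‖A^{-1/2}‖`. -/
lemma inv_sqrt_le_opNorm {A : Matrix n n ℂ} (hA : A.PosDef) {x : ℝ} (hx : x ∈ spectrum ℝ A) :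
    (Real.sqrt x)⁻¹ ≤ opNorm (matInvSqrt A) := by
  have hcont : ContinuousOn (fun x : ℝ => (Real.sqrt x)⁻¹) (spectrum ℝ A) :=
    Real.continuous_sqrt.continuousOn.inv₀ fun y hy =>
      (Real.sqrt_pos.2 (spectrum_pos_of_posDef hA hy)).ne'
  exact (le_abs_self _).trans
    (norm_apply_le_norm_cfc (fun x : ℝ => (Real.sqrt x)⁻¹) A hx hcont hA.isHermitian.isSelfAdjoint)

lemma opNorm_matInvSqrt_pos [Nonempty n] {A : Matrix n n ℂ} (hA : A.PosDef) :
    0 < opNorm (matInvSqrt A) := by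
  obtain ⟨i⟩ := ‹Nonempty n›
  have hx := hA.isHermitian.eigenvalues_mem_spectrum_real i
  exact (inv_pos.2 (Real.sqrt_pos.2 (hA.eigenvalues_pos i))).trans_le (inv_sqrt_le_opNorm hA hx)

lemma isSelfAdjoint_matSqrt (A : Matrix n n ℂ) : IsSelfAdjoint (matSqrt A) :=
  cfc_predicate Real.sqrt A

lemma matSqrt_mul_self {A : Matrix n n ℂ} (hA : A.PosDef) : matSqrt A * matSqrt A = A := by
  have hsa : IsSelfAdjoint A := hA.isHermitian.isSelfAdjoint
  rw [matSqrt, ← cfc_mul Real.sqrt Real.sqrt A]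
  conv_rhs => rw [← cfc_id ℝ A]
  exact cfc_congr fun x hx => Real.mul_self_sqrt (spectrum_pos_of_posDef hA hx).le

open scoped InnerProductSpace MatrixOrder in
/-- `A^{1/2} ≥ ‖A^{-1/2}‖⁻¹ · 1` as quadratic forms, because `√x ≥ ‖A^{-1/2}‖⁻¹` on the spectrum. -/
lemma le_inner_matSqrt {A : Matrix n n ℂ} (hA : A.PosDef) (v : EuclideanSpace ℂ n) :
    (opNorm (matInvSqrt A))⁻¹ * ‖v‖ ^ 2 ≤
      (⟪v, Matrix.toEuclideanCLM (𝕜 := ℂ) (matSqrt A) v⟫_ℂ).re := by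
  set c := (opNorm (matInvSqrt A))⁻¹ with hc
  have hle : algebraMap ℝ (Matrix n n ℂ) c ≤ matSqrt A := by
    refine algebraMap_le_cfc Real.sqrt c A (fun x hx => ?_) (by fun_prop)
      hA.isHermitian.isSelfAdjoint
    have := Real.sqrt_pos.2 (spectrum_pos_of_posDef hA hx)
    exact inv_le_of_inv_le₀ this (inv_sqrt_le_opNorm hA hx)
  have hpos :=
    (Matrix.isPositive_toEuclideanLin_iff.2 (Matrix.le_iff.1 hle)).re_inner_nonneg_right v
  have hval : Matrix.toEuclideanLin (matSqrt A - algebraMap ℝ (Matrix n n ℂ) c) v =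
      Matrix.toEuclideanCLM (𝕜 := ℂ) (matSqrt A) v - (c : ℂ) • v := by
    have h : algebraMap ℝ (Matrix n n ℂ) c = (c : ℂ) • 1 := by
      rw [Algebra.algebraMap_eq_smul_one]; ext i j; simp
    rw [← Matrix.coe_toEuclideanCLM_eq_toEuclideanLin, h, map_sub, map_smul, map_one]
    rfl
  rw [hval, inner_sub_right, inner_smul_right, inner_self_eq_norm_sq_to_K] at hpos
  have : ((c : ℂ) * ((‖v‖ : ℝ) : ℂ) ^ 2).re = c * ‖v‖ ^ 2 := by norm_cast
  simp only [map_sub, RCLike.re_to_complex] at hpos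
  have h2 := sub_nonneg.1 hpos
  rw [← this]; exact h2

/-- **Continuity bound for the matrix square root.** For Hermitian positive definite `A, B`:
`‖A^{1/2} − B^{1/2}‖ ≤ ‖A − B‖ / (‖A^{-1/2}‖⁻¹ + ‖B^{-1/2}‖⁻¹)`. -/
theorem sqrt_continuity
    (N : ℕ) (A B : Matrix (Fin N) (Fin N) ℂ) (hA : A.PosDef) (hB : B.PosDef) :
    opNorm (matSqrt A - matSqrt B) ≤
      opNorm (A - B) / ((opNorm (matInvSqrt A))⁻¹ + (opNorm (matInvSqrt B))⁻¹) := by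
  rcases N.eq_zero_or_pos with rfl | hN
  -- In dimension zero both sides vanish, the right one being the junk value `0 / 0`.
  · have h0 : ∀ M : Matrix (Fin 0) (Fin 0) ℂ, opNorm M = 0 := fun M => by
      rw [Subsingleton.elim M 0, opNorm, map_zero, norm_zero]
    simp [h0]
  · have : Nonempty (Fin N) := ⟨⟨0, hN⟩⟩
    have hs := inv_pos.2 (opNorm_matInvSqrt_pos hA)
    have ht := inv_pos.2 (opNorm_matInvSqrt_pos hB)
    rw [le_div_iff₀ (add_pos hs ht)]
    have key := norm_sub_mul_add_le ((isSelfAdjoint_matSqrt A).map (Matrix.toEuclideanCLM (𝕜 := ℂ)))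
      ((isSelfAdjoint_matSqrt B).map (Matrix.toEuclideanCLM (𝕜 := ℂ)))
      (le_inner_matSqrt hA) (le_inner_matSqrt hB)
    rwa [← map_mul, ← map_mul, matSqrt_mul_self hA, matSqrt_mul_self hB, ← map_sub,
      ← map_sub] at key
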